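/- Let Q = (Q_0, Q_1) be a finite quiver, and let 𝒬 = (Q, Q_2) be a 2-quiver with a 2-arrow V : Γ(1) ⟹ Γ(2) such that Γ(1) is a connected full subquiver with a unique source p. Let 𝒬_p be the 2-quiver obtained from 𝒬 by replacing V with the 2-arrow V_p : {p} ⟹ Γ(2). Then a subset β ⊆ Q_0 is strong successor closed in 𝒬 if and only if it is strong successor closed in 𝒬_p. -/

import Mathlib

/-- A set of vertices `β` is successor closed: arrows starting in `β` end in `β`. -/
def SuccClosed {V : Type*} (E : V → V → Prop) (β : Set V) : Prop :=
  ∀ a b, E a b → a ∈ β → b ∈ β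

/-- `β` is strong successor closed in the 2-quiver `(E, Q2)`: it is successor closed and
for every 2-arrow `(Γ1, Γ2) ∈ Q2` with `Γ1 ⊆ β` we have `Γ2 ∩ β ≠ ∅`. -/
def StrongSuccClosed {V : Type*} (E : V → V → Prop) (Q2 : Set (Set V × Set V))
    (β : Set V) : Prop :=
  SuccClosed E β ∧ ∀ γ ∈ Q2, γ.1 ⊆ β → (γ.2 ∩ β).Nonempty

/-- let `𝒬 = (E, Q2)` be a 2-quiver on a finite acyclic quiver with a
2-arrow `(Γ1, Γ2) ∈ Q2` whose source subquiver `Γ1` is connected with a unique source `p`.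
Replacing this 2-arrow by `({p}, Γ2)` does not change the strong successor closed subsets. -/
theorem stmt_11 {V : Type*} [Finite V] (E : V → V → Prop)
    (hacyc : ∀ a, ¬ Relation.TransGen E a a)
    (Q2 : Set (Set V × Set V)) (Γ1 Γ2 : Set V) (hmem : (Γ1, Γ2) ∈ Q2)
    (hconn : ∀ a ∈ Γ1, ∀ b ∈ Γ1,
      Relation.ReflTransGen (fun x y => x ∈ Γ1 ∧ y ∈ Γ1 ∧ (E x y ∨ E y x)) a b)
    (p : V) (hp : p ∈ Γ1)
    (hsource : ∀ a ∈ Γ1, ¬ E a p)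
    (huniq : ∀ q ∈ Γ1, (∀ a ∈ Γ1, ¬ E a q) → q = p)
    (β : Set V) :
    StrongSuccClosed E Q2 β ↔
      StrongSuccClosed E (insert (({p} : Set V), Γ2) (Q2 \ {(Γ1, Γ2)})) β := by
  have key : SuccClosed E β → p ∈ β → Γ1 ⊆ β := by
    intro hS hpβ
    have : Std.Irrefl (Relation.TransGen E) := ⟨hacyc⟩
    have hwf : WellFounded (Relation.TransGen E) :=
      Finite.wellFounded_of_trans_of_irrefl _
    intro q
    induction q using hwf.induction with
    | _ q ih =>
      intro hq
      by_cases h : ∀ a ∈ Γ1, ¬ E a q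
      · rw [huniq q hq h]; exact hpβ
      · push Not at h
        obtain ⟨a, ha, haq⟩ := h
        exact hS a q haq (ih a (Relation.TransGen.single haq) ha)
  constructor
  · rintro ⟨hS, h⟩
    refine ⟨hS, ?_⟩
    rintro γ (rfl | hγ) hsub
    · exact h (Γ1, Γ2) hmem (key hS (hsub rfl))
    · exact h γ hγ.1 hsub
  · rintro ⟨hS, h⟩
    refine ⟨hS, ?_⟩
    intro γ hγ hsub
    by_cases he : γ = (Γ1, Γ2)
    · subst he
      exact h (({p} : Set V), Γ2) (Set.mem_insert _ _) (Set.singleton_subset_iff.2 (hsub hp))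
    · exact h γ (Set.mem_insert_of_mem _ ⟨hγ, he⟩) hsub
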